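/- For every N ≥ 1 and integers 0 ≤ m ≤ m', the number of pairs (x, y) of N-bit binary numbers with x +_m y ≡ x + y (mod 2^N) is at most the number of pairs with x +_{m'} y ≡ x + y (mod 2^N); hence the agreement probability π_m(N) is nondecreasing in m. -/

import Mathlib

/-!
The agreement set itself grows with `m`, so the cardinalities are monotone.

The untruncated carry at position `i` is `tcarry i x y i`, since there the lower bound `i - i = 0`
on `j` is vacuous. It satisfies the schoolbook recurrence (`tcarry_full_succ`), so xor-ing it into
the digits gives ordinary addition modulo `2 ^ N` (`add_mod_eq_sum`). By uniqueness of binary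
digits, `m`-truncated addition agrees with ordinary addition exactly when the `m`-truncated carries
equal the untruncated ones at all positions `i < N` (`tadd_eq_iff`). Truncated carries are
nondecreasing in `m` and bounded by the untruncated carry, so equality for `m` forces equality
for every `m' ≥ m`.
-/

/-- The `i`-th binary digit of `x`. -/
def bitd (x i : ℕ) : ℕ := (x / 2 ^ i) % 2

open Classical in
/-- The `m`-truncated carry bit at position `i`: it is 1 iff there is
`i - m ≤ j < i` with `(x_j, y_j) = (1,1)` and `x_k + y_k = 1` for all `j < k < i`. -/
noncomputable def tcarry (m x y i : ℕ) : ℕ :=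
  if ∃ j, i - m ≤ j ∧ j < i ∧ bitd x j = 1 ∧ bitd y j = 1 ∧
      (∀ k, j < k → k < i → bitd x k + bitd y k = 1) then 1 else 0

/-- The `m`-truncated addition of `N`-bit numbers: the bitwise xor of `x`, `y`
and the truncated carry array. -/
noncomputable def tadd (N m x y : ℕ) : ℕ :=
  ∑ i ∈ Finset.range N, ((bitd x i + bitd y i + tcarry m x y i) % 2) * 2 ^ i

lemma bitd_lt_two (x i : ℕ) : bitd x i < 2 := Nat.mod_lt _ (by norm_num)

lemma tcarry_le_one (m x y i : ℕ) : tcarry m x y i ≤ 1 := by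
  unfold tcarry; split_ifs <;> simp

lemma tcarry_mono {m m' : ℕ} (h : m ≤ m') (x y i : ℕ) : tcarry m x y i ≤ tcarry m' x y i := by
  unfold tcarry
  split_ifs with h1 h2
  · exact le_rfl
  · obtain ⟨j, hj, hr⟩ := h1
    exact absurd ⟨j, by omega, hr⟩ h2
  · exact Nat.zero_le _
  · exact le_rfl

lemma tcarry_le_full (m x y i : ℕ) : tcarry m x y i ≤ tcarry i x y i := by
  unfold tcarry
  split_ifs with h1 h2
  · exact le_rfl
  · obtain ⟨j, hj, hr⟩ := h1
    exact absurd ⟨j, by omega, hr⟩ h2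
  · exact Nat.zero_le _
  · exact le_rfl

lemma tcarry_full_eq_one_iff (x y i : ℕ) : tcarry i x y i = 1 ↔
    ∃ j, j < i ∧ bitd x j = 1 ∧ bitd y j = 1 ∧
      (∀ k, j < k → k < i → bitd x k + bitd y k = 1) := by
  simp [tcarry]

lemma tcarry_full_zero (x y : ℕ) : tcarry 0 x y 0 = 0 := by
  simp [tcarry]

/-- The untruncated carry out of position `i` is 1 iff that position generates a carry, or
propagates an incoming one. -/
lemma tcarry_full_succ_eq_one_iff (x y i : ℕ) : tcarry (i + 1) x y (i + 1) = 1 ↔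
    (bitd x i = 1 ∧ bitd y i = 1) ∨ (bitd x i + bitd y i = 1 ∧ tcarry i x y i = 1) := by
  rw [tcarry_full_eq_one_iff, tcarry_full_eq_one_iff]
  constructor
  · rintro ⟨j, hj, hx, hy, hk⟩
    rcases Nat.lt_succ_iff_lt_or_eq.mp hj with h | rfl
    · exact Or.inr ⟨hk i h (by omega), j, h, hx, hy, fun k h1 h2 => hk k h1 (by omega)⟩
    · exact Or.inl ⟨hx, hy⟩
  · rintro (⟨hx, hy⟩ | ⟨hs, j, hj, hx, hy, hk⟩)
    · exact ⟨i, by omega, hx, hy, fun k h1 h2 => by omega⟩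
    · refine ⟨j, by omega, hx, hy, fun k h1 h2 => ?_⟩
      rcases Nat.lt_succ_iff_lt_or_eq.mp h2 with h | rfl
      · exact hk k h1 h
      · exact hs

lemma tcarry_full_succ (x y i : ℕ) :
    tcarry (i + 1) x y (i + 1) = (bitd x i + bitd y i + tcarry i x y i) / 2 := by
  have h := tcarry_full_succ_eq_one_iff x y i
  have h1 := tcarry_le_one (i + 1) x y (i + 1)
  have h2 := tcarry_le_one i x y i
  have h3 := bitd_lt_two x i
  have h4 := bitd_lt_two y i
  omega

lemma mod_two_pow_succ (x i : ℕ) : x % 2 ^ (i + 1) = x % 2 ^ i + 2 ^ i * bitd x i := by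
  rw [pow_succ, Nat.mod_mul, bitd]

/-- Ripple-carry addition of the `N` lowest digits, with the carry out kept explicitly. -/
lemma ripple_sum (N x y : ℕ) :
    ∑ i ∈ Finset.range N, ((bitd x i + bitd y i + tcarry i x y i) % 2) * 2 ^ i
      + tcarry N x y N * 2 ^ N = x % 2 ^ N + y % 2 ^ N := by
  induction N with
  | zero => simp [tcarry_full_zero, Nat.mod_one]
  | succ n ih =>
    rw [Finset.sum_range_succ, mod_two_pow_succ, mod_two_pow_succ, tcarry_full_succ, pow_succ]
    have h := Nat.mod_add_div (bitd x n + bitd y n + tcarry n x y n) 2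
    linear_combination ih + 2 ^ n * h

lemma digit_sum_lt (N : ℕ) (d : ℕ → ℕ) :
    ∑ i ∈ Finset.range N, (d i % 2) * 2 ^ i < 2 ^ N := by
  induction N with
  | zero => simp
  | succ n ih =>
    rw [Finset.sum_range_succ, pow_succ]
    have : d n % 2 * 2 ^ n ≤ 1 * 2 ^ n := Nat.mul_le_mul_right _ (by omega)
    omega

/-- Uniqueness of binary digits. -/
lemma digit_sum_inj (N : ℕ) (d e : ℕ → ℕ)
    (h : ∑ i ∈ Finset.range N, (d i % 2) * 2 ^ i = ∑ i ∈ Finset.range N, (e i % 2) * 2 ^ i) :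
    ∀ i < N, d i % 2 = e i % 2 := by
  induction N with
  | zero => simp
  | succ n ih =>
    rw [Finset.sum_range_succ, Finset.sum_range_succ] at h
    have hd := digit_sum_lt n d
    have he := digit_sum_lt n e
    have hn : d n % 2 = e n % 2 := by
      rcases Nat.mod_two_eq_zero_or_one (d n) with h1 | h1 <;>
      rcases Nat.mod_two_eq_zero_or_one (e n) with h2 | h2 <;>
      rw [h1, h2] at h <;> omega
    rw [hn] at h
    intro i hi
    rcases Nat.lt_succ_iff_lt_or_eq.mp hi with h' | rfl
    · exact ih (Nat.add_right_cancel h) i h'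
    · exact hn

lemma add_mod_eq_sum (N x y : ℕ) : (x + y) % 2 ^ N =
    ∑ i ∈ Finset.range N, ((bitd x i + bitd y i + tcarry i x y i) % 2) * 2 ^ i := by
  rw [Nat.add_mod, ← ripple_sum, Nat.add_mul_mod_self_right]
  exact Nat.mod_eq_of_lt (digit_sum_lt N _)

lemma tadd_eq_iff (N m x y : ℕ) :
    tadd N m x y = (x + y) % 2 ^ N ↔ ∀ i < N, tcarry m x y i = tcarry i x y i := by
  rw [add_mod_eq_sum, tadd]
  constructor
  · intro h i hi
    have := digit_sum_inj N _ _ h i hi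
    have h1 := tcarry_le_one m x y i
    have h2 := tcarry_le_one i x y i
    omega
  · intro h
    exact Finset.sum_congr rfl fun i hi => by rw [h i (Finset.mem_range.mp hi)]

open Classical in
/-- the number of pairs of `N`-bit numbers on which truncated addition
agrees with ordinary addition is nondecreasing in the truncation parameter `m`;
hence the agreement probability `π_m(N)` is nondecreasing in `m`. -/
theorem card_agree_mono (N m m' : ℕ) (hN : 1 ≤ N) (hmm : m ≤ m') :
    ((Finset.range (2 ^ N) ×ˢ Finset.range (2 ^ N)).filter fun p =>
        tadd N m p.1 p.2 = (p.1 + p.2) % 2 ^ N).card ≤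
      ((Finset.range (2 ^ N) ×ˢ Finset.range (2 ^ N)).filter fun p =>
        tadd N m' p.1 p.2 = (p.1 + p.2) % 2 ^ N).card := by
  refine Finset.card_le_card (Finset.monotone_filter_right _ fun p _ hp => ?_)
  rw [tadd_eq_iff] at hp ⊢
  exact fun i hi => le_antisymm (tcarry_le_full m' _ _ i)
    ((hp i hi).symm.le.trans (tcarry_mono hmm _ _ i))
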